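/- Let ∅ ≠ L ⊆ M ⊊ N ⊆ V, and for Z ⊆ M set δ_Z(x_Z) = λ_Z^M(x_Z) − λ_Z^N(x_Z). Then for each x_L ∈ 𝔛_L the following are equivalent: (i) δ_L(x_L) = 0; (ii) d̃_L^{(M)}(x_L) = Σ_{Z ⊊ L} δ_Z(x_Z); (iii) Σ_{Z ⊆ L} (−1)^{|L∖Z|} d̃_Z^{(M)}(x_Z) = 0. -/

import Mathlib

open Finset

variable {V : Type*} [Fintype V] [DecidableEq V]
variable {𝔛 : V → Type*} [∀ v, Fintype (𝔛 v)] [∀ v, DecidableEq (𝔛 v)]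
  [∀ v, Nonempty (𝔛 v)]

/-- The marginal `p_A` of a distribution `p` on the full table, evaluated at the
`A`-coordinates of `x`. -/
noncomputable def margin (p : (∀ v, 𝔛 v) → ℝ) (A : Finset V) (x : ∀ v, 𝔛 v) : ℝ :=
  ∑ y ∈ Finset.univ.filter (fun y : ∀ v, 𝔛 v => ∀ v ∈ A, y v = x v), p y

/-- `ν_L^M(x_L) = (1/|𝔛_{M∖L}|) Σ_{j ∈ 𝔛_M : j_L = x_L} log p_M(j)`, written with sums over
full configurations (for `L ⊆ M` the extra coordinates cancel against the normalization). -/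
noncomputable def nu (p : (∀ v, 𝔛 v) → ℝ) (L M : Finset V) (x : ∀ v, 𝔛 v) : ℝ :=
  (∏ v ∈ Lᶜ, (Fintype.card (𝔛 v) : ℝ))⁻¹ *
    ∑ j ∈ Finset.univ.filter (fun j : ∀ v, 𝔛 v => ∀ v ∈ L, j v = x v),
      Real.log (margin p M j)

/-- The marginal log-linear parameter `λ_L^M(x_L) = Σ_{L' ⊆ L} (−1)^{|L∖L'|} ν_{L'}^M(x_{L'})`. -/
noncomputable def mll (p : (∀ v, 𝔛 v) → ℝ) (L M : Finset V) (x : ∀ v, 𝔛 v) : ℝ :=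
  ∑ L' ∈ L.powerset, (-1 : ℝ) ^ ((L \ L').card) * nu p L' M x

/-- `d^{(M)}(x_M) = log p_M(x_M) − ν_M^N(x_M)`. -/
noncomputable def dd (p : (∀ v, 𝔛 v) → ℝ) (M N : Finset V) (x : ∀ v, 𝔛 v) : ℝ :=
  Real.log (margin p M x) - nu p M N x

/-- `d̃_Z^{(M)}(x_Z) = (1/|𝔛_{M∖Z}|) Σ_{j ∈ 𝔛_M : j_Z = x_Z} d^{(M)}(j)`, written with sums
over full configurations (for `Z ⊆ M` the extra coordinates cancel). -/
noncomputable def dtilde (p : (∀ v, 𝔛 v) → ℝ) (M N Z : Finset V) (x : ∀ v, 𝔛 v) : ℝ :=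
  (∏ v ∈ Zᶜ, (Fintype.card (𝔛 v) : ℝ))⁻¹ *
    ∑ j ∈ Finset.univ.filter (fun j : ∀ v, 𝔛 v => ∀ v ∈ Z, j v = x v), dd p M N j

/-!
Averaging over the configurations that agree with `x` on a set of coordinates has the tower
property of conditional expectations: for `Z ⊆ M`, averaging over `M` first and over `Z` afterwards
is the same as averaging over `Z`. Hence `d̃_Z = ν_Z^M - ν_Z^N` for all `Z ⊆ M`, so that `Z ↦ δ_Z`
is the Möbius transform of `Z ↦ d̃_Z` on the subsets of `L`. This is (iii), and Möbius inversion
`d̃_L = ∑ Z ⊆ L, δ_Z` gives (ii).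
-/

section MoebiusTransform

variable {ι E : Type*} [DecidableEq ι] [AddCommGroup E]

/-- The Möbius transform of a set function on the lattice of finite sets. It turns averages into
interaction parameters. The signs are integers, so that values in any abelian group are allowed. -/
def moebiusTransform (F : Finset ι → E) (s : Finset ι) : E :=
  ∑ t ∈ s.powerset, (-1 : ℤ) ^ #(s \ t) • F t

lemma moebiusTransform_congr {F G : Finset ι → E} {s : Finset ι} (h : ∀ t ⊆ s, F t = G t) :
    moebiusTransform F s = moebiusTransform G s :=
  sum_congr rfl fun t ht => by rw [h t (mem_powerset.1 ht)]

lemma moebiusTransform_sub (F G : Finset ι → E) (s : Finset ι) :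
    moebiusTransform (F - G) s = moebiusTransform F s - moebiusTransform G s := by
  simp only [moebiusTransform, Pi.sub_apply, smul_sub, sum_sub_distrib]

lemma moebiusTransform_insert (F : Finset ι → E) {a : ι} {s : Finset ι} (ha : a ∉ s) :
    moebiusTransform F (insert a s) =
      moebiusTransform (fun t => F (insert a t)) s - moebiusTransform F s := by
  rw [moebiusTransform, sum_powerset_insert ha, sub_eq_neg_add, moebiusTransform,
    moebiusTransform, ← sum_neg_distrib]
  congr 1 <;> refine sum_congr rfl fun t ht => ?_
  · have hat : a ∉ t := fun h => ha (mem_powerset.1 ht h)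
    have hcard : #(insert a s \ t) = #(s \ t) + 1 := by
      rw [insert_sdiff_of_notMem _ hat, card_insert_of_notMem (by simp [ha])]
    rw [hcard, pow_succ, mul_neg_one, neg_smul]
  · rw [insert_sdiff_insert, sdiff_insert_of_notMem ha]

theorem sum_powerset_moebiusTransform (F : Finset ι → E) (s : Finset ι) :
    ∑ t ∈ s.powerset, moebiusTransform F t = F s := by
  induction s using Finset.induction_on generalizing F with
  | empty => simp [moebiusTransform]
  | insert a s ha ih =>
    have hinsert : ∑ t ∈ s.powerset, moebiusTransform F (insert a t) = F (insert a s) - F s := by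
      rw [sum_congr rfl fun t ht =>
        moebiusTransform_insert F (notMem_mono (mem_powerset.1 ht) ha), sum_sub_distrib, ih, ih]
    rw [sum_powerset_insert ha, ih, hinsert, add_sub_cancel]

theorem moebiusTransform_eq_zero_iff (F : Finset ι → E) (s : Finset ι) :
    moebiusTransform F s = 0 ↔ F s = ∑ t ∈ s.ssubsets, moebiusTransform F t := by
  rw [← sum_powerset_moebiusTransform F s, ← add_sum_erase _ _ (mem_powerset_self s), ← ssubsets,
    add_eq_right]

end MoebiusTransform

section CylinderMean

open scoped BigOperators

variable {ι : Type*} [Fintype ι] [DecidableEq ι]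
variable {α : ι → Type*} [∀ i, Fintype (α i)] [∀ i, DecidableEq (α i)]

/-- The cylinder of configurations that agree with `x` on the coordinates in `L`, over which the
averages defining the parameters run. -/
def cylinder (L : Finset ι) (x : ∀ i, α i) : Finset (∀ i, α i) :=
  {y | ∀ i ∈ L, y i = x i}

lemma mem_cylinder {L : Finset ι} {x y : ∀ i, α i} : y ∈ cylinder L x ↔ ∀ i ∈ L, y i = x i := by
  simp [cylinder]

lemma mem_cylinder_comm {L : Finset ι} {x y : ∀ i, α i} :
    y ∈ cylinder L x ↔ x ∈ cylinder L y := by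
  simp only [mem_cylinder, eq_comm]

lemma cylinder_eq_of_mem {L M : Finset ι} (hLM : L ⊆ M) {x y : ∀ i, α i}
    (hy : y ∈ cylinder M x) : cylinder L y = cylinder L x := by
  ext z
  simp only [mem_cylinder] at hy ⊢
  exact forall₂_congr fun i hi => by rw [hy i (hLM hi)]

lemma card_cylinder (L : Finset ι) (x : ∀ i, α i) :
    #(cylinder L x) = ∏ i ∈ Lᶜ, Fintype.card (α i) := by
  have hpi : cylinder L x = Fintype.piFinset fun i => if i ∈ L then {x i} else univ := by
    ext y
    simp only [mem_cylinder, Fintype.mem_piFinset]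
    refine forall_congr' fun i => ?_
    by_cases hi : i ∈ L <;> simp [hi]
  simp [hpi, Fintype.card_piFinset, apply_ite Finset.card, prod_ite, ← compl_filter]

variable {E : Type*} [AddCommGroup E] [Module ℚ≥0 E]

/-- The average of `f` over the configurations that agree with `x` on `L`: the conditional
expectation of `f` given the `L`-coordinates under the uniform distribution. -/
def cylinderMean (L : Finset ι) (f : (∀ i, α i) → E) (x : ∀ i, α i) : E :=
  𝔼 y ∈ cylinder L x, f y

lemma cylinderMean_eq_inv_prod_card_mul_sum {K : Type*} [Field K] [CharZero K] (L : Finset ι)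
    (f : (∀ i, α i) → K) (x : ∀ i, α i) :
    cylinderMean L f x = (∏ i ∈ Lᶜ, (Fintype.card (α i) : K))⁻¹ * ∑ y ∈ cylinder L x, f y := by
  rw [cylinderMean, expect_eq_sum_div_card, card_cylinder, Nat.cast_prod, div_eq_inv_mul]

lemma cylinderMean_sub (L : Finset ι) (f g : (∀ i, α i) → E) :
    cylinderMean L (f - g) = cylinderMean L f - cylinderMean L g :=
  funext fun _ => expect_sub_distrib _ _ _

theorem cylinderMean_cylinderMean {L M : Finset ι} (hLM : L ⊆ M) (f : (∀ i, α i) → E) :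
    cylinderMean L (cylinderMean M f) = cylinderMean L f := by
  ext x
  have hswap (y z : ∀ i, α i) : y ∈ cylinder L x ∧ z ∈ cylinder M y ↔
      y ∈ cylinder M z ∧ z ∈ cylinder L x := by
    rw [mem_cylinder_comm (y := z), and_comm]
    refine and_congr_right fun hyz => ?_
    rw [mem_cylinder_comm, cylinder_eq_of_mem hLM hyz, mem_cylinder_comm]
  have hmean (z : ∀ i, α i) : ∑ y ∈ cylinder M z, (#(cylinder M y) : ℚ≥0)⁻¹ • f z = f z :=
    calc ∑ y ∈ cylinder M z, (#(cylinder M y) : ℚ≥0)⁻¹ • f z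
        = 𝔼 _y ∈ cylinder M z, f z := by
          rw [expect, smul_sum]
          exact sum_congr rfl fun y hy => by rw [cylinder_eq_of_mem Subset.rfl hy]
      _ = f z := expect_const ⟨z, mem_cylinder.2 fun _ _ => rfl⟩ _
  simp only [cylinderMean, expect, smul_sum (s := cylinder M _)]
  rw [sum_comm' hswap, sum_congr rfl fun z _ => hmean z]

/-- The interaction parameter of `f` at `L`, of which the marginal log-linear parameter is the case
where `f` is the logarithm of a margin. -/
def interaction (f : (∀ i, α i) → E) (L : Finset ι) (x : ∀ i, α i) : E :=
  moebiusTransform (fun Z => cylinderMean Z f x) L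

lemma interaction_sub (f g : (∀ i, α i) → E) (L : Finset ι) (x : ∀ i, α i) :
    interaction (f - g) L x = interaction f L x - interaction g L x := by
  simp only [interaction, cylinderMean_sub]
  exact moebiusTransform_sub _ _ _

lemma nu_eq_cylinderMean (p : (∀ i, α i) → ℝ) (L M : Finset ι) :
    nu p L M = cylinderMean L (Real.log ∘ margin p M) :=
  funext fun x => (cylinderMean_eq_inv_prod_card_mul_sum L _ x).symm

lemma mll_eq_interaction (p : (∀ i, α i) → ℝ) (L M : Finset ι) :
    mll p L M = interaction (Real.log ∘ margin p M) L := by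
  ext x
  simp [mll, interaction, moebiusTransform, nu_eq_cylinderMean]

lemma dtilde_eq_cylinderMean (p : (∀ i, α i) → ℝ) (M N Z : Finset ι) :
    dtilde p M N Z =
      cylinderMean Z (Real.log ∘ margin p M - cylinderMean M (Real.log ∘ margin p N)) := by
  ext x
  rw [← nu_eq_cylinderMean]
  exact (cylinderMean_eq_inv_prod_card_mul_sum Z _ x).symm

theorem stmt6_general (f g : (∀ i, α i) → E) {L M : Finset ι} (hLM : L ⊆ M) (x : ∀ i, α i) :
    (interaction f L x - interaction g L x = 0 ↔
      cylinderMean L (f - cylinderMean M g) x =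
        ∑ Z ∈ L.ssubsets, (interaction f Z x - interaction g Z x)) ∧
    (interaction f L x - interaction g L x = 0 ↔
      moebiusTransform (fun Z => cylinderMean Z (f - cylinderMean M g) x) L = 0) := by
  have hmean : ∀ Z ⊆ L, cylinderMean Z (f - cylinderMean M g) x = cylinderMean Z (f - g) x :=
    fun Z hZ => by
      rw [cylinderMean_sub, cylinderMean_cylinderMean (hZ.trans hLM), ← cylinderMean_sub]
  simp only [← interaction_sub, hmean L Subset.rfl, moebiusTransform_congr hmean]
  exact ⟨moebiusTransform_eq_zero_iff _ L, Iff.rfl⟩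

end CylinderMean

theorem stmt6 (p : (∀ v, 𝔛 v) → ℝ) (hp : ∀ x, 0 < p x) (hsum : ∑ x, p x = 1)
    (L M N : Finset V) (hL : L.Nonempty) (hLM : L ⊆ M) (hMN : M ⊂ N)
    (x : ∀ v, 𝔛 v) :
    ((mll p L M x - mll p L N x = 0) ↔
      dtilde p M N L x =
        ∑ Z ∈ L.powerset.filter (fun Z => Z ≠ L), (mll p Z M x - mll p Z N x)) ∧
    ((mll p L M x - mll p L N x = 0) ↔
      ∑ Z ∈ L.powerset, (-1 : ℝ) ^ ((L \ Z).card) * dtilde p M N Z x = 0) := by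
  simpa [mll_eq_interaction, dtilde_eq_cylinderMean, moebiusTransform, filter_ne', ssubsets]
    using stmt6_general (Real.log ∘ margin p M) (Real.log ∘ margin p N) hLM x
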